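/- arXiv:2501.02657 — 3 statements merged into one kernel-verified Lean document; each statement's English description precedes it below -/
import Mathlib

section
/- Let $F : \mathbb{R}^n \to \mathbb{R}^n$, let $\mathcal{J}(x)$ be an $n \times n$ matrix with $\|\mathcal{J}(x)^{\mathsf{T}} v\| \leq c_2 \|v\|$ for all $v$ (some $c_2 > 0$), and suppose the safeguard $\langle F(x), \mathcal{J}(x) F(x) \rangle \geq \varepsilon \|F(x)\|^2$ holds for some $\varepsilon > 0$. Set $g = \mathcal{J}(x)^{\mathsf{T}} F(x)$ and $d = -F(x)$. Then $\langle g, d \rangle \leq -\frac{\varepsilon}{c_2^2} \|g\|^2$, i.e. there is a constant $c_3 = \varepsilon / c_2^2 > 0$ with $\langle \nabla f(x), d \rangle \leq -c_3 \|\nabla f(x)\|^2$ for the merit function $f = \frac{1}{2}\|F\|^2$. -/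
open Matrix

theorem isAdjointPair_toEuclideanLin_transpose {m n : Type*} [Fintype m] [Fintype n]
    [DecidableEq m] [DecidableEq n] (A : Matrix m n ℝ) :
    LinearMap.IsAdjointPair (innerₗ (EuclideanSpace ℝ m)) (innerₗ (EuclideanSpace ℝ n))
      (toEuclideanLin Aᵀ) (toEuclideanLin A) := by
  intro v w
  rw [innerₗ_apply_apply, innerₗ_apply_apply, ← conjTranspose_eq_transpose_of_trivial,
    toEuclideanLin_conjTranspose_eq_adjoint, LinearMap.adjoint_inner_left]

theorem div_sq_mul_sq_le_mul_sq {K : Type*} [Field K] [LinearOrder K] [IsStrictOrderedRing K]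
    {a b c ε : K} (ha : 0 ≤ a) (hc : 0 < c) (hε : 0 ≤ ε) (hab : a ≤ c * b) :
    ε / c ^ 2 * a ^ 2 ≤ ε * b ^ 2 := by
  have hdiv : a / c ≤ b := (div_le_iff₀' hc).2 hab
  calc
    ε / c ^ 2 * a ^ 2 = ε * (a / c) ^ 2 := by ring
    _ ≤ ε * b ^ 2 := by gcongr

theorem descent_estimate_from_safeguard_general {E : Type*} [SeminormedAddCommGroup E]
    [InnerProductSpace ℝ E] {J Jadj : E →ₗ[ℝ] E}
    (hadj : LinearMap.IsAdjointPair (innerₗ E) (innerₗ E) Jadj J) {u : E} {c ε : ℝ}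
    (hc : 0 < c) (hε : 0 ≤ ε) (hbound : ‖Jadj u‖ ≤ c * ‖u‖)
    (hsafe : ε * ‖u‖ ^ 2 ≤ inner ℝ u (J u)) :
    inner ℝ (Jadj u) (-u) ≤ -(ε / c ^ 2) * ‖Jadj u‖ ^ 2 := by
  have hinner : inner ℝ (Jadj u) u = inner ℝ u (J u) := hadj u u
  calc
    inner ℝ (Jadj u) (-u) = -inner ℝ u (J u) := by rw [inner_neg_right, hinner]
    _ ≤ -(ε * ‖u‖ ^ 2) := neg_le_neg hsafe
    _ ≤ -(ε / c ^ 2 * ‖Jadj u‖ ^ 2) :=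
      neg_le_neg (div_sq_mul_sq_le_mul_sq (norm_nonneg _) hc hε hbound)
    _ = -(ε / c ^ 2) * ‖Jadj u‖ ^ 2 := (neg_mul _ _).symm

/-- If `‖𝒥(x)ᵀ v‖ ≤ c₂ ‖v‖` for all `v` and the safeguard
`⟪F x, 𝒥(x) F x⟫ ≥ ε ‖F x‖²` holds, then with `g = 𝒥(x)ᵀ F x` and `d = -F x` one has
`⟪g, d⟫ ≤ -(ε / c₂²) ‖g‖²`. -/
theorem descent_estimate_from_safeguard (n : ℕ)
    (F : EuclideanSpace ℝ (Fin n) → EuclideanSpace ℝ (Fin n))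
    (x : EuclideanSpace ℝ (Fin n)) (J : Matrix (Fin n) (Fin n) ℝ)
    (c₂ ε : ℝ) (hc₂ : 0 < c₂) (hε : 0 < ε)
    (hbound : ∀ v : EuclideanSpace ℝ (Fin n), ‖Matrix.toEuclideanLin Jᵀ v‖ ≤ c₂ * ‖v‖)
    (hsafe : (inner ℝ (F x) (Matrix.toEuclideanLin J (F x)) : ℝ) ≥ ε * ‖F x‖ ^ 2)
    (g d : EuclideanSpace ℝ (Fin n))
    (hg : g = Matrix.toEuclideanLin Jᵀ (F x)) (hd : d = -F x) :
    (inner ℝ g d : ℝ) ≤ -(ε / c₂ ^ 2) * ‖g‖ ^ 2 := by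
  subst hg hd
  exact descent_estimate_from_safeguard_general (isAdjointPair_toEuclideanLin_transpose J)
    hc₂ hε.le (hbound (F x)) hsafe
end

section
/- (Main theorem, smooth single-valued case.) Let $F : \mathbb{R}^n \to \mathbb{R}^n$ be continuously differentiable with Jacobian $\mathcal{J}(x) = DF(x)$, and let $f(x) = \frac{1}{2}\|F(x)\|^2$. Let $\varepsilon > 0$, $\gamma > 0$, $M \in \mathbb{N}$, and $0 < a \leq b$. Let $(x_k)_{k\geq 0}$ and $(\lambda_k)_{k \geq 0}$ satisfy, for all $k$: (i) $\langle F(x_k), \mathcal{J}(x_k) F(x_k) \rangle \geq \varepsilon \|F(x_k)\|^2$; (ii) $\lambda_k \in [a, b]$; (iii) $x_{k+1} = x_k - \lambda_k F(x_k)$; (iv) the nonmonotone line search condition $f(x_{k+1}) \leq \max_{0 \leq j \leq \min(k,M)} f(x_{k-j}) - 2\gamma \lambda_k \langle F(x_k), \mathcal{J}(x_k) F(x_k) \rangle$; and (v) all $x_k$ lie in a fixed compact set $K \subseteq \mathbb{R}^n$. Then $\lim_{k \to \infty} \|F(x_k)\| = 0$; in particular every accumulation point $\bar{x}$ of $(x_k)$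 satisfies $F(\bar{x}) = 0$. -/
open Filter

/-!
Along the iterates the merit `u k = ½‖F (x k)‖²` grows by at most a constant factor `D` per step,
because `F` is Lipschitz there and the step `λ_k F (x k)` is controlled by the residual. The line
search gives `u (k + 1) ≤ max - c * u k`, where `max` is taken over the last `M + 1` merits.
Bounding `u k` below by `u (k + 1) / D` turns this into `u (k + 1) ≤ D / (D + c) * max`, a
contraction by a fixed factor over every `M + 1` consecutive steps, so `u` decays geometrically.
-/

/-- The reference value of Grippo's nonmonotone line search: the maximum of
`u k, u (k - 1), …, u (k - min k M)`. The lag is cut off at `k`, so the subtraction `k - j` never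
truncates. -/
def windowMax {α : Type*} [SemilatticeSup α] (u : ℕ → α) (M k : ℕ) : α :=
  (Finset.range (min k M + 1)).sup' (Finset.nonempty_range_iff.mpr (Nat.succ_ne_zero _))
    fun j => u (k - j)

theorem exists_windowMax_eq {α : Type*} [LinearOrder α] (u : ℕ → α) (M k : ℕ) :
    ∃ j ≤ min k M, windowMax u M k = u (k - j) := by
  obtain ⟨j, hj, hmax⟩ := Finset.exists_mem_eq_sup'
    (Finset.nonempty_range_iff.mpr (Nat.succ_ne_zero (min k M))) fun j => u (k - j)
  exact ⟨j, Finset.mem_range_succ_iff.mp hj, hmax⟩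

section GeometricDecay

variable {u : ℕ → ℝ} {M : ℕ}

-- The exponent is `⌈k / (M + 1)⌉`: a lag of at most `M` loses at most one factor of `q`.
theorem le_pow_mul_of_le_mul_windowMax {q : ℝ} (hu₀ : 0 ≤ u 0) (hq₀ : 0 ≤ q) (hq₁ : q ≤ 1)
    (h : ∀ k, u (k + 1) ≤ q * windowMax u M k) (k : ℕ) :
    u k ≤ q ^ ((k + M) / (M + 1)) * u 0 := by
  induction k using Nat.strong_induction_on with
  | _ k ih =>
    rcases k with _ | k
    · simp [Nat.div_eq_of_lt]
    · obtain ⟨j, hj, hmax⟩ := exists_windowMax_eq u M k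
      have hexp : k / (M + 1) ≤ (k - j + M) / (M + 1) := Nat.div_le_div_right (by lia)
      calc u (k + 1) ≤ q * u (k - j) := hmax ▸ h k
        _ ≤ q * (q ^ ((k - j + M) / (M + 1)) * u 0) := by gcongr; exact ih _ (by lia)
        _ ≤ q * (q ^ (k / (M + 1)) * u 0) := by
          gcongr q * (?_ * u 0)
          exact pow_le_pow_of_le_one hq₀ hq₁ hexp
        _ = q ^ ((k + 1 + M) / (M + 1)) * u 0 := by
          rw [add_right_comm, add_assoc, Nat.add_div_right k M.succ_pos, pow_succ']
          ring

theorem tendsto_zero_of_le_mul_windowMax {q : ℝ} (hu : ∀ k, 0 ≤ u k) (hq₀ : 0 ≤ q) (hq₁ : q < 1)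
    (h : ∀ k, u (k + 1) ≤ q * windowMax u M k) : Tendsto u atTop (nhds 0) := by
  have hexp : Tendsto (fun k => (k + M) / (M + 1)) atTop atTop :=
    (Nat.tendsto_div_const_atTop M.succ_ne_zero).comp (tendsto_add_atTop_nat M)
  have hbound : Tendsto (fun k => q ^ ((k + M) / (M + 1)) * u 0) atTop (nhds 0) := by
    simpa using ((tendsto_pow_atTop_nhds_zero_of_lt_one hq₀ hq₁).comp hexp).mul_const (u 0)
  exact squeeze_zero hu (le_pow_mul_of_le_mul_windowMax (hu 0) hq₀ hq₁.le h) hbound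

theorem tendsto_zero_of_le_windowMax_sub {c D : ℝ} (hu : ∀ k, 0 ≤ u k) (hc : 0 < c) (hD : 0 ≤ D)
    (hgrowth : ∀ k, u (k + 1) ≤ D * u k)
    (hdecrease : ∀ k, u (k + 1) ≤ windowMax u M k - c * u k) : Tendsto u atTop (nhds 0) := by
  have hDc : 0 < D + c := by positivity
  refine tendsto_zero_of_le_mul_windowMax (M := M) (q := D / (D + c)) hu (by positivity)
    ((div_lt_one hDc).mpr (by linarith)) fun k => ?_
  rw [div_mul_eq_mul_div, le_div_iff₀ hDc]
  calc u (k + 1) * (D + c) = D * u (k + 1) + c * u (k + 1) := by ring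
    _ ≤ D * (windowMax u M k - c * u k) + c * (D * u k) := by
      gcongr
      exacts [hdecrease k, hgrowth k]
    _ = D * windowMax u M k := by ring

end GeometricDecay

/-- The least-squares merit function `½‖F‖²` of the equation `F z = 0`. -/
noncomputable def residualMerit {X G : Type*} [Norm G] (F : X → G) (z : X) : ℝ :=
  (1 / 2 : ℝ) * ‖F z‖ ^ 2

theorem residualMerit_nonneg {X G : Type*} [Norm G] (F : X → G) (z : X) :
    0 ≤ residualMerit F z := by
  unfold residualMerit
  positivity

theorem tendsto_norm_of_tendsto_residualMerit {ι X G : Type*} [SeminormedAddGroup G] {F : X → G}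
    {x : ι → X} {l : Filter ι} (h : Tendsto (fun i => residualMerit F (x i)) l (nhds 0)) :
    Tendsto (fun i => ‖F (x i)‖) l (nhds 0) := by
  have hsqrt : ∀ z, √(2 * residualMerit F z) = ‖F z‖ := fun z => by
    rw [residualMerit, ← mul_assoc, mul_one_div_cancel two_ne_zero, one_mul,
      Real.sqrt_sq (norm_nonneg _)]
  simpa only [hsqrt, mul_zero, Real.sqrt_zero] using (h.const_mul 2).sqrt

theorem eq_zero_of_mapClusterPt_of_tendsto_norm {ι X G : Type*} [TopologicalSpace X]
    [NormedAddCommGroup G] {F : X → G} {x : ι → X} {l : Filter ι} {z : X}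
    (hF : ContinuousAt F z) (hx : Tendsto (fun i => ‖F (x i)‖) l (nhds 0))
    (hz : MapClusterPt z l x) : F z = 0 := by
  have hcluster : ClusterPt (F z) (map (F ∘ x) l) := hz.continuousAt_comp hF
  exact eq_of_nhds_neBot (hcluster.mono (tendsto_zero_iff_norm_tendsto_zero.mpr hx))

section NormedSpace

variable {E : Type*} [SeminormedAddCommGroup E] [NormedSpace ℝ E] {F : E → E} {L : NNReal}

theorem norm_map_sub_smul_le {s : Set E} (hF : LipschitzOnWith L F s) {z : E} {t : ℝ}
    (hz : z ∈ s) (hstep : z - t • F z ∈ s) :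
    ‖F (z - t • F z)‖ ≤ (1 + L * |t|) * ‖F z‖ := by
  calc ‖F (z - t • F z)‖ ≤ ‖F z‖ + ‖F (z - t • F z) - F z‖ := norm_le_norm_add_norm_sub' _ _
    _ ≤ ‖F z‖ + L * ‖z - t • F z - z‖ := by gcongr; exact hF.norm_sub_le hstep hz
    _ = (1 + L * |t|) * ‖F z‖ := by
      rw [sub_sub_cancel_left, norm_neg, norm_smul, Real.norm_eq_abs]
      ring

variable {x : ℕ → E} {lam : ℕ → ℝ} {b : ℝ}

theorem residualMerit_succ_le (hF : LipschitzOnWith L F (Set.range x))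
    (hlam : ∀ k, |lam k| ≤ b) (hx : ∀ k, x (k + 1) = x k - lam k • F (x k)) (k : ℕ) :
    residualMerit F (x (k + 1)) ≤ (1 + L * b) ^ 2 * residualMerit F (x k) := by
  have hnorm : ‖F (x (k + 1))‖ ≤ (1 + L * b) * ‖F (x k)‖ := by
    calc ‖F (x (k + 1))‖ ≤ (1 + L * |lam k|) * ‖F (x k)‖ := by
          rw [hx]
          exact norm_map_sub_smul_le hF ⟨k, rfl⟩ ⟨k + 1, hx k⟩
      _ ≤ (1 + L * b) * ‖F (x k)‖ := by gcongr; exact hlam k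
  calc residualMerit F (x (k + 1)) ≤ (1 / 2 : ℝ) * ((1 + L * b) * ‖F (x k)‖) ^ 2 := by
        unfold residualMerit
        gcongr
    _ = (1 + L * b) ^ 2 * residualMerit F (x k) := by
        unfold residualMerit
        ring

theorem tendsto_norm_of_residualMerit_le_windowMax_sub {c : ℝ} {M : ℕ} (hc : 0 < c)
    (hF : LipschitzOnWith L F (Set.range x)) (hlam : ∀ k, |lam k| ≤ b)
    (hx : ∀ k, x (k + 1) = x k - lam k • F (x k))
    (hdecrease : ∀ k, residualMerit F (x (k + 1)) ≤
      windowMax (fun i => residualMerit F (x i)) M k - c * residualMerit F (x k)) :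
    Tendsto (fun k => ‖F (x k)‖) atTop (nhds 0) :=
  tendsto_norm_of_tendsto_residualMerit <|
    tendsto_zero_of_le_windowMax_sub (fun k => residualMerit_nonneg F (x k)) hc (sq_nonneg _)
      (residualMerit_succ_le hF hlam hx) hdecrease

end NormedSpace

theorem mul_residualMerit_le_mul_of_mul_sq_norm_le {X G : Type*} [Norm G] {F : X → G} {z : X}
    {ε γ a t p : ℝ} (hε : 0 ≤ ε) (hγ : 0 ≤ γ) (ha : 0 ≤ a) (hat : a ≤ t)
    (hp : ε * ‖F z‖ ^ 2 ≤ p) : 4 * γ * a * ε * residualMerit F z ≤ 2 * γ * t * p := by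
  have ht : 0 ≤ t := ha.trans hat
  calc 4 * γ * a * ε * residualMerit F z = 2 * γ * a * (ε * ‖F z‖ ^ 2) := by
        unfold residualMerit
        ring
    _ ≤ 2 * γ * t * p := by gcongr

theorem spectral_subgradient_convergence_general {E : Type*} [NormedAddCommGroup E]
    [InnerProductSpace ℝ E] {F : E → E} {x : ℕ → E} {lam : ℕ → ℝ} {L : NNReal} {ε γ a b : ℝ}
    {M : ℕ} (hF : Differentiable ℝ F) (hL : LipschitzOnWith L F (Set.range x))
    (hε : 0 < ε) (hγ : 0 < γ) (ha : 0 < a)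
    (hsafeguard : ∀ k, ε * ‖F (x k)‖ ^ 2 ≤ inner ℝ (F (x k)) (fderiv ℝ F (x k) (F (x k))))
    (hlam : ∀ k, lam k ∈ Set.Icc a b) (hx : ∀ k, x (k + 1) = x k - lam k • F (x k))
    (hsearch : ∀ k, residualMerit F (x (k + 1)) ≤
      windowMax (fun i => residualMerit F (x i)) M k -
        2 * γ * lam k * inner ℝ (F (x k)) (fderiv ℝ F (x k) (F (x k)))) :
    Tendsto (fun k => ‖F (x k)‖) atTop (nhds 0) ∧
      ∀ xbar : E, MapClusterPt xbar atTop x → F xbar = 0 := by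
  have habs : ∀ k, |lam k| ≤ b := fun k => by
    rw [abs_of_pos (ha.trans_le (hlam k).1)]
    exact (hlam k).2
  have hdecrease : ∀ k, residualMerit F (x (k + 1)) ≤
      windowMax (fun i => residualMerit F (x i)) M k -
        4 * γ * a * ε * residualMerit F (x k) := fun k =>
    (hsearch k).trans <| sub_le_sub_left
      (mul_residualMerit_le_mul_of_mul_sq_norm_le hε.le hγ.le ha.le (hlam k).1 (hsafeguard k)) _
  have hlim : Tendsto (fun k => ‖F (x k)‖) atTop (nhds 0) :=
    tendsto_norm_of_residualMerit_le_windowMax_sub (by positivity) hL habs hx hdecrease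
  exact ⟨hlim, fun xbar => eq_zero_of_mapClusterPt_of_tendsto_norm (hF xbar).continuousAt hlim⟩

/-- Main convergence theorem (smooth single-valued case) for the spectral subgradient
algorithm: under the safeguard `⟪F(x_k), 𝒥(x_k) F(x_k)⟫ ≥ ε ‖F(x_k)‖²`, step sizes in
`[a,b] ⊆ (0,∞)`, updates `x_{k+1} = x_k - λ_k F(x_k)`, the nonmonotone line search
condition for the merit function `f = ½‖F‖²`, and iterates staying in a compact set,
one has `‖F(x_k)‖ → 0`; in particular every accumulation point `x̄` satisfies `F x̄ = 0`. -/
theorem spectral_subgradient_convergence (n : ℕ)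
    (F : EuclideanSpace ℝ (Fin n) → EuclideanSpace ℝ (Fin n)) (hF : ContDiff ℝ 1 F)
    (f : EuclideanSpace ℝ (Fin n) → ℝ) (hf : f = fun z => (1 / 2 : ℝ) * ‖F z‖ ^ 2)
    (ε γ a b : ℝ) (hε : 0 < ε) (hγ : 0 < γ) (M : ℕ) (ha : 0 < a) (hab : a ≤ b)
    (x : ℕ → EuclideanSpace ℝ (Fin n)) (lam : ℕ → ℝ)
    (h1 : ∀ k, (inner ℝ (F (x k)) (fderiv ℝ F (x k) (F (x k))) : ℝ) ≥ ε * ‖F (x k)‖ ^ 2)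
    (h2 : ∀ k, lam k ∈ Set.Icc a b)
    (h3 : ∀ k, x (k + 1) = x k - lam k • F (x k))
    (h4 : ∀ k, f (x (k + 1)) ≤
      (Finset.range (min k M + 1)).sup'
        (Finset.nonempty_range_iff.mpr (Nat.succ_ne_zero _)) (fun j => f (x (k - j))) -
      2 * γ * lam k * (inner ℝ (F (x k)) (fderiv ℝ F (x k) (F (x k))) : ℝ))
    (K : Set (EuclideanSpace ℝ (Fin n))) (hK : IsCompact K) (h5 : ∀ k, x k ∈ K) :
    Tendsto (fun k => ‖F (x k)‖) atTop (nhds 0) ∧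
    (∀ xbar : EuclideanSpace ℝ (Fin n), MapClusterPt xbar atTop x → F xbar = 0) := by
  subst hf
  obtain ⟨L, hL⟩ := hF.locallyLipschitz.locallyLipschitzOn.exists_lipschitzOnWith_of_compact hK
  exact spectral_subgradient_convergence_general (hF.differentiable one_ne_zero)
    (hL.mono (Set.range_subset_iff.mpr h5)) hε hγ ha h1 h2 h3 h4
end

section
/- (Corollary, smooth single-valued case.) Let $F : \mathbb{R}^n \to \mathbb{R}^n$ be continuously differentiable with Jacobian $\mathcal{J}(x) = DF(x)$, let $f(x) = \frac{1}{2}\|F(x)\|^2$, let $\gamma > 0$, $M \in \mathbb{N}$, $0 < a \leq b$, $r \in [0,1]$, and let $K \subseteq \mathbb{R}^n$ be a compact set on which the convex combination $\mathcal{J}_{cc}(x) = (1-r)\mathcal{J}(x) + r \mathcal{J}(x)^{\mathsf{T}}$ is positive definite for every $x \in K$. Let $(x_k)$, $(\lambda_k)$ satisfy, for all $k$: $\lambda_k \in [a,b]$; $x_{k+1} = x_k - \lambda_k F(x_k)$; the nonmonotone condition $f(x_{k+1}) \leq \max_{0 \leq j \leq \min(k,M)} f(x_{k-j}) - 2\gamma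 \lambda_k \langle F(x_k), \mathcal{J}(x_k) F(x_k) \rangle$; and $x_k \in K$. Then $\lim_{k \to \infty} \|F(x_k)\| = 0$. -/
open Matrix Filter

/-!
On the compact set `K` the form `v ↦ ⟪v, DF(x) v⟫` is coercive uniformly in `x`, so the line search
makes the merit values `g k = ½‖F (x k)‖²` satisfy `g (k + 1) ≤ V k - σ * g k` with `σ > 0`, where
`V k` is the maximum of the last `min k M + 1` values. Hence `V` decreases to some limit `L ≥ 0`.
The maximum `V (k + M + 1)` is attained at some `g (l + 1)` with `k ≤ l`. As `F` is Lipschitz on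
`K` and the steps are bounded, `g (l + 1) ≤ C * g l`, so a large `V (k + M + 1)` forces a large
decrease: `σ * V (k + M + 1) ≤ C * (V k - V (k + M + 1))`. In the limit `σ * L ≤ 0`, so `L = 0`.
-/

section RecentMax

/-- The maximum of the last `min k M + 1` values `g k, g (k - 1), …` of a sequence: the reference
value of a nonmonotone line search with memory `M`. The window is truncated at index `0`, so the
subtraction `k - j` never is. -/
def recentMax {α : Type*} [SemilatticeSup α] (M : ℕ) (g : ℕ → α) (k : ℕ) : α :=
  (Finset.range (min k M + 1)).sup'
    (Finset.nonempty_range_iff.mpr (Nat.succ_ne_zero _)) (fun j => g (k - j))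

theorem le_recentMax {α : Type*} [SemilatticeSup α] {M : ℕ} (g : ℕ → α) {i k : ℕ}
    (hik : i ≤ k) (hki : k ≤ i + M) : g i ≤ recentMax M g k := by
  have hmem : k - i ∈ Finset.range (min k M + 1) := Finset.mem_range.mpr (by omega)
  calc g i = g (k - (k - i)) := by rw [Nat.sub_sub_self hik]
    _ ≤ recentMax M g k := Finset.le_sup' (fun j => g (k - j)) hmem

theorem recentMax_le {α : Type*} [SemilatticeSup α] {M : ℕ} {g : ℕ → α} {k : ℕ} {c : α}
    (h : ∀ i ≤ k, k ≤ i + M → g i ≤ c) : recentMax M g k ≤ c := by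
  refine Finset.sup'_le _ _ fun j hj => h (k - j) (Nat.sub_le k j) ?_
  have := Finset.mem_range.mp hj
  omega

theorem exists_recentMax_eq {α : Type*} [LinearOrder α] (M : ℕ) (g : ℕ → α) (k : ℕ) :
    ∃ i ≤ k, k ≤ i + M ∧ recentMax M g k = g i := by
  obtain ⟨j, hj, hmax⟩ := Finset.exists_mem_eq_sup'
    (Finset.nonempty_range_iff.mpr (Nat.succ_ne_zero (min k M))) (fun j => g (k - j))
  have := Finset.mem_range.mp hj
  exact ⟨k - j, Nat.sub_le k j, by omega, hmax⟩

theorem antitone_recentMax {α : Type*} [SemilatticeSup α] {M : ℕ} {g : ℕ → α}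
    (h : ∀ k, g (k + 1) ≤ recentMax M g k) : Antitone (recentMax M g) := by
  refine antitone_nat_of_succ_le fun k => recentMax_le fun i hik hki => ?_
  rcases hik.eq_or_lt with rfl | hlt
  · exact h k
  · exact le_recentMax g (Nat.lt_succ_iff.mp hlt) (by omega)

variable {M : ℕ} {g : ℕ → ℝ} {σ C : ℝ}

theorem mul_recentMax_le_mul_sub (hσ : 0 ≤ σ) (hC : 0 ≤ C) (hanti : Antitone (recentMax M g))
    (hdecr : ∀ k, g (k + 1) ≤ recentMax M g k - σ * g k)
    (hgrowth : ∀ k, g (k + 1) ≤ C * g k) (k : ℕ) :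
    σ * recentMax M g (k + (M + 1)) ≤ C * (recentMax M g k - recentMax M g (k + (M + 1))) := by
  obtain ⟨i, -, hki, hmax⟩ := exists_recentMax_eq M g (k + (M + 1))
  obtain ⟨l, rfl⟩ : ∃ l, i = l + 1 := ⟨i - 1, by omega⟩
  rw [hmax]
  have hlk : recentMax M g l ≤ recentMax M g k := hanti (by omega)
  calc σ * g (l + 1) ≤ σ * (C * g l) := mul_le_mul_of_nonneg_left (hgrowth l) hσ
    _ = C * (σ * g l) := by ring
    _ ≤ C * (recentMax M g k - g (l + 1)) :=
      mul_le_mul_of_nonneg_left (by linarith [hdecr l]) hC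

theorem tendsto_zero_of_le_recentMax_sub (hσ : 0 < σ) (hC : 0 ≤ C) (hg : ∀ k, 0 ≤ g k)
    (hdecr : ∀ k, g (k + 1) ≤ recentMax M g k - σ * g k)
    (hgrowth : ∀ k, g (k + 1) ≤ C * g k) : Tendsto g atTop (nhds 0) := by
  have hle : ∀ k, g k ≤ recentMax M g k := fun k => le_recentMax g le_rfl (Nat.le_add_right k M)
  have hnonneg : ∀ k, 0 ≤ recentMax M g k := fun k => (hg k).trans (hle k)
  have hanti : Antitone (recentMax M g) := antitone_recentMax fun k =>
    (hdecr k).trans (sub_le_self _ (mul_nonneg hσ.le (hg k)))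
  obtain ⟨L, hlim⟩ : ∃ L, Tendsto (recentMax M g) atTop (nhds L) :=
    ⟨_, tendsto_atTop_ciInf hanti ⟨0, Set.forall_mem_range.mpr hnonneg⟩⟩
  have hlim_shift : Tendsto (fun k => recentMax M g (k + (M + 1))) atTop (nhds L) :=
    (tendsto_add_atTop_iff_nat (M + 1)).mpr hlim
  have hL_le : σ * L ≤ C * (L - L) :=
    le_of_tendsto_of_tendsto' (hlim_shift.const_mul σ) ((hlim.sub hlim_shift).const_mul C)
      (mul_recentMax_le_mul_sub hσ.le hC hanti hdecr hgrowth)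
  rw [sub_self, mul_zero] at hL_le
  have hL : L = 0 :=
    le_antisymm (nonpos_of_mul_nonpos_right hL_le hσ) (ge_of_tendsto' hlim hnonneg)
  exact squeeze_zero hg hle (hL ▸ hlim)

end RecentMax

section Coercivity

variable {E : Type*} [NormedAddCommGroup E] [InnerProductSpace ℝ E]

theorem mul_norm_sq_le_inner_of_sphere {A : E →ₗ[ℝ] E} {u : ℝ}
    (h : ∀ v ∈ Metric.sphere (0 : E) 1, u ≤ inner ℝ v (A v)) (v : E) :
    u * ‖v‖ ^ 2 ≤ inner ℝ v (A v) := by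
  rcases eq_or_ne v 0 with rfl | hv
  · simp
  obtain ⟨w, hw, hvw⟩ : ∃ w ∈ Metric.sphere (0 : E) 1, ‖v‖ • w = v := by
    have hnorm : ‖v‖ ≠ 0 := norm_ne_zero_iff.mpr hv
    exact ⟨‖v‖⁻¹ • v, by simp [norm_smul, hnorm], smul_inv_smul₀ hnorm v⟩
  calc u * ‖v‖ ^ 2 ≤ inner ℝ w (A w) * ‖v‖ ^ 2 :=
        mul_le_mul_of_nonneg_right (h w hw) (sq_nonneg _)
    _ = inner ℝ (‖v‖ • w) (A (‖v‖ • w)) := by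
        rw [map_smul, real_inner_smul_left, real_inner_smul_right]
        ring
    _ = inner ℝ v (A v) := by rw [hvw]

theorem exists_forall_mul_norm_sq_le_inner_of_isCompact [FiniteDimensional ℝ E]
    {X : Type*} [TopologicalSpace X] {K : Set X} (hK : IsCompact K)
    {A : X → E →L[ℝ] E} (hA : ContinuousOn A K)
    (hpos : ∀ x ∈ K, ∀ v, v ≠ 0 → 0 < inner ℝ v (A x v)) :
    ∃ u : ℝ, 0 < u ∧ ∀ x ∈ K, ∀ v, u * ‖v‖ ^ 2 ≤ inner ℝ v (A x v) := by
  have hcont : ContinuousOn (fun p : X × E => inner ℝ p.2 (A p.1 p.2))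
      (K ×ˢ Metric.sphere (0 : E) 1) :=
    continuousOn_snd.inner ((hA.comp continuousOn_fst fun _ hp => hp.1).clm_apply continuousOn_snd)
  obtain ⟨u, hu, hle⟩ := (hK.prod (isCompact_sphere (0 : E) 1)).exists_forall_le' hcont
    fun p hp => hpos p.1 hp.1 p.2 (ne_zero_of_mem_unit_sphere ⟨p.2, hp.2⟩)
  exact ⟨u, hu, fun x hx => mul_norm_sq_le_inner_of_sphere (A := (A x : E →ₗ[ℝ] E))
    fun v hv => hle (x, v) ⟨hx, hv⟩⟩

theorem inner_toEuclideanLin_transpose_self {ι : Type*} [Fintype ι] [DecidableEq ι]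
    (A : Matrix ι ι ℝ) (v : EuclideanSpace ℝ ι) :
    inner ℝ v (toEuclideanLin Aᵀ v) = inner ℝ v (toEuclideanLin A v) := by
  rw [← conjTranspose_eq_transpose_of_trivial, toEuclideanLin_conjTranspose_eq_adjoint,
    LinearMap.adjoint_inner_right, real_inner_comm]

theorem inner_toEuclideanLin_combination_transpose_self {ι : Type*} [Fintype ι] [DecidableEq ι]
    (r : ℝ) (A : Matrix ι ι ℝ) (v : EuclideanSpace ℝ ι) :
    inner ℝ v (toEuclideanLin ((1 - r) • A + r • Aᵀ) v) = inner ℝ v (toEuclideanLin A v) := by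
  simp only [map_add, map_smul, LinearMap.add_apply, LinearMap.smul_apply, inner_add_right,
    real_inner_smul_right, inner_toEuclideanLin_transpose_self]
  ring

end Coercivity

section Iteration

theorem exists_lipschitzOnWith_of_contDiffAt {E F : Type*} [NormedAddCommGroup E]
    [NormedSpace ℝ E] [NormedAddCommGroup F] [NormedSpace ℝ F] {f : E → F} {K : Set E}
    (hK : IsCompact K) (hf : ∀ x ∈ K, ContDiffAt ℝ 1 f x) : ∃ L, LipschitzOnWith L f K := by
  refine LocallyLipschitzOn.exists_lipschitzOnWith_of_compact hK fun x hx => ?_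
  obtain ⟨L, t, ht, hL⟩ := (hf x hx).exists_lipschitzOnWith
  exact ⟨L, t, mem_nhdsWithin_of_mem_nhds ht, hL⟩

variable {E : Type*} [NormedAddCommGroup E] {F : E → E} {K : Set E} {L : NNReal}
  {γ a b : ℝ} {M : ℕ} {x : ℕ → E} {lam : ℕ → ℝ}

theorem norm_apply_sub_smul_le [NormedSpace ℝ E] (hF : LipschitzOnWith L F K) {y : E} {t : ℝ}
    (ht : 0 ≤ t) (htb : t ≤ b) (hy : y ∈ K) (hy' : y - t • F y ∈ K) :
    ‖F (y - t • F y)‖ ≤ (1 + L * b) * ‖F y‖ := by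
  have hlip : ‖F (y - t • F y) - F y‖ ≤ L * (t * ‖F y‖) := by
    simpa only [sub_sub_cancel_left, norm_neg, norm_smul, Real.norm_of_nonneg ht]
      using hF.norm_sub_le hy' hy
  calc ‖F (y - t • F y)‖ ≤ ‖F y‖ + ‖F (y - t • F y) - F y‖ := norm_le_norm_add_norm_sub' _ _
    _ ≤ ‖F y‖ + L * (b * ‖F y‖) := by grw [hlip, htb]
    _ = (1 + L * b) * ‖F y‖ := by ring

/-- In the application `q k` is `⟪F (x k), DF (x k) (F (x k))⟫`, and `hsafe` is the paper's
safeguard condition. -/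
theorem tendsto_norm_of_lineSearch_of_safeguard [NormedSpace ℝ E] (hF : LipschitzOnWith L F K)
    (hγ : 0 < γ) (ha : 0 < a) (hlam : ∀ k, lam k ∈ Set.Icc a b)
    (hx : ∀ k, x (k + 1) = x k - lam k • F (x k)) (hxK : ∀ k, x k ∈ K)
    {u : ℝ} (hu : 0 < u) {q : ℕ → ℝ} (hsafe : ∀ k, u * ‖F (x k)‖ ^ 2 ≤ q k)
    (hls : ∀ k, (1 / 2 : ℝ) * ‖F (x (k + 1))‖ ^ 2 ≤
      recentMax M (fun i => (1 / 2 : ℝ) * ‖F (x i)‖ ^ 2) k - 2 * γ * lam k * q k) :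
    Tendsto (fun k => ‖F (x k)‖) atTop (nhds 0) := by
  have hlam_nonneg : ∀ k, 0 ≤ lam k := fun k => ha.le.trans (hlam k).1
  have hmerit : Tendsto (fun k => (1 / 2 : ℝ) * ‖F (x k)‖ ^ 2) atTop (nhds 0) := by
    refine tendsto_zero_of_le_recentMax_sub (M := M) (σ := 4 * γ * a * u) (C := (1 + L * b) ^ 2)
      (by positivity) (sq_nonneg _) (fun k => by positivity) (fun k => ?decrease) (fun k => ?growth)
    case decrease =>
      refine (hls k).trans (sub_le_sub_left ?_ _)
      calc 4 * γ * a * u * (1 / 2 * ‖F (x k)‖ ^ 2) = 2 * γ * a * (u * ‖F (x k)‖ ^ 2) := by ring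
        _ ≤ 2 * γ * lam k * q k := by
          have := hlam_nonneg k
          gcongr
          exacts [(hlam k).1, hsafe k]
    case growth =>
      have hstep : ‖F (x (k + 1))‖ ≤ (1 + L * b) * ‖F (x k)‖ := by
        rw [hx]
        exact norm_apply_sub_smul_le hF (hlam_nonneg k) (hlam k).2 (hxK k) (hx k ▸ hxK (k + 1))
      calc 1 / 2 * ‖F (x (k + 1))‖ ^ 2 ≤ 1 / 2 * ((1 + L * b) * ‖F (x k)‖) ^ 2 := by grw [hstep]
        _ = (1 + L * b) ^ 2 * (1 / 2 * ‖F (x k)‖ ^ 2) := by ring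
  have hsq : Tendsto (fun k => ‖F (x k)‖ ^ 2) atTop (nhds 0) := by
    simpa using hmerit.const_mul 2
  simpa using hsq.sqrt

theorem spectral_subgradient_convergence_of_posDef_jacobian_general [InnerProductSpace ℝ E]
    [FiniteDimensional ℝ E] (hK : IsCompact K) (hF : ∀ z ∈ K, ContDiffAt ℝ 1 F z)
    (hpos : ∀ z ∈ K, ∀ v, v ≠ 0 → 0 < inner ℝ v (fderiv ℝ F z v))
    (hγ : 0 < γ) (ha : 0 < a) (hlam : ∀ k, lam k ∈ Set.Icc a b)
    (hx : ∀ k, x (k + 1) = x k - lam k • F (x k)) (hxK : ∀ k, x k ∈ K)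
    (hls : ∀ k, (1 / 2 : ℝ) * ‖F (x (k + 1))‖ ^ 2 ≤
      recentMax M (fun i => (1 / 2 : ℝ) * ‖F (x i)‖ ^ 2) k -
        2 * γ * lam k * inner ℝ (F (x k)) (fderiv ℝ F (x k) (F (x k)))) :
    Tendsto (fun k => ‖F (x k)‖) atTop (nhds 0) := by
  obtain ⟨L, hL⟩ := exists_lipschitzOnWith_of_contDiffAt hK hF
  have hF' : ContinuousOn (fderiv ℝ F) K := fun z hz =>
    ((hF z hz).continuousAt_fderiv one_ne_zero).continuousWithinAt
  obtain ⟨u, hu, hcoer⟩ := exists_forall_mul_norm_sq_le_inner_of_isCompact hK hF' hpos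
  exact tendsto_norm_of_lineSearch_of_safeguard hL hγ ha hlam hx hxK hu
    (fun k => hcoer (x k) (hxK k) (F (x k))) hls

end Iteration

/-- Corollary (smooth single-valued case): if on the compact set `K` containing the
iterates the convex combination `𝒥_cc(x) = (1-r) 𝒥(x) + r 𝒥(x)ᵀ` of the Jacobian
(as a matrix) and its transpose is positive definite, then under step sizes in `[a,b]`,
updates `x_{k+1} = x_k - λ_k F(x_k)` and the nonmonotone line search condition for the
merit function `f = ½‖F‖²`, one has `‖F(x_k)‖ → 0`. -/
theorem spectral_subgradient_convergence_of_posDef_jacobian (n : ℕ)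
    (F : EuclideanSpace ℝ (Fin n) → EuclideanSpace ℝ (Fin n)) (hF : ContDiff ℝ 1 F)
    (J : EuclideanSpace ℝ (Fin n) → Matrix (Fin n) (Fin n) ℝ)
    (hJ : ∀ z, Matrix.toEuclideanLin (J z) = (fderiv ℝ F z : EuclideanSpace ℝ (Fin n) →ₗ[ℝ] EuclideanSpace ℝ (Fin n)))
    (f : EuclideanSpace ℝ (Fin n) → ℝ) (hf : f = fun z => (1 / 2 : ℝ) * ‖F z‖ ^ 2)
    (γ a b r : ℝ) (hγ : 0 < γ) (M : ℕ) (ha : 0 < a) (hab : a ≤ b)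
    (hr : r ∈ Set.Icc (0 : ℝ) 1)
    (K : Set (EuclideanSpace ℝ (Fin n))) (hK : IsCompact K)
    (hpd : ∀ x ∈ K, ∀ v : EuclideanSpace ℝ (Fin n), v ≠ 0 →
      0 < (inner ℝ v (Matrix.toEuclideanLin ((1 - r) • J x + r • (J x)ᵀ) v) : ℝ))
    (x : ℕ → EuclideanSpace ℝ (Fin n)) (lam : ℕ → ℝ)
    (h2 : ∀ k, lam k ∈ Set.Icc a b)
    (h3 : ∀ k, x (k + 1) = x k - lam k • F (x k))
    (h4 : ∀ k, f (x (k + 1)) ≤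
      (Finset.range (min k M + 1)).sup'
        (Finset.nonempty_range_iff.mpr (Nat.succ_ne_zero _)) (fun j => f (x (k - j))) -
      2 * γ * lam k * (inner ℝ (F (x k)) (Matrix.toEuclideanLin (J (x k)) (F (x k))) : ℝ))
    (h5 : ∀ k, x k ∈ K) :
    Tendsto (fun k => ‖F (x k)‖) atTop (nhds 0) := by
  simp only [inner_toEuclideanLin_combination_transpose_self, hJ, hf] at hpd h4
  exact spectral_subgradient_convergence_of_posDef_jacobian_general hK
    (fun _ _ => hF.contDiffAt) hpd hγ ha h2 h3 h5 h4
end
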